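/- (Corollary 2.) Let N ≥ 2, let R be an N×N real symmetric positive-definite matrix with difference covariance matrix D, let u ∈ ℝ^N, and let 1_N ∈ ℝ^N be the all-ones vector. Define for v ∈ ℝ^N the functions φ_min(v) = inf over p ∈ ℝ of (1/2)·(p·1_N + v − u)ᵀ R⁻¹ (p·1_N + v − u) and φ_D(v) = (1/2)·(Δv − Δu)ᵀ D⁻¹ (Δv − Δu), where Δu, Δv are the difference vectors of u and v. Then φ_min(v) = φ_D(v) for every v ∈ ℝ^N; consequently, for any set X, any map v : X → ℝ^N, and any subset S ⊆ X, the set of minimizers over S of x ↦ φ_min(v(x)) equals the set of minimizers over S of x ↦ φ_D(v(x)). -/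

import Mathlib

open Matrix

/-- The difference covariance matrix: for an `N×N` matrix `R` with `N = n+2`, the
`(N−1)×(N−1)` matrix with entries `D_{mk} = R_{NN} + R_{mk} − R_{mN} − R_{kN}`. -/
def diffMatrix {n : ℕ} (R : Matrix (Fin (n + 2)) (Fin (n + 2)) ℝ) :
    Matrix (Fin (n + 1)) (Fin (n + 1)) ℝ :=
  fun m k =>
    R (Fin.last (n + 1)) (Fin.last (n + 1)) + R m.castSucc k.castSucc
      - R m.castSucc (Fin.last (n + 1)) - R k.castSucc (Fin.last (n + 1))

/-- The difference vector `Δg ∈ ℝ^{N−1}`, `(Δg)_m = g_m − g_N`. -/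
def diffVec {n : ℕ} (g : Fin (n + 2) → ℝ) : Fin (n + 1) → ℝ :=
  fun m => g m.castSucc - g (Fin.last (n + 1))

/-- The differencing matrix. -/
def diffOp (n : ℕ) : Matrix (Fin (n + 1)) (Fin (n + 2)) ℝ :=
  fun m j => (1 : Matrix (Fin (n + 2)) (Fin (n + 2)) ℝ) m.castSucc j
    - (1 : Matrix (Fin (n + 2)) (Fin (n + 2)) ℝ) (Fin.last (n + 1)) j

lemma diffOp_mulVec {n : ℕ} (g : Fin (n + 2) → ℝ) : diffOp n *ᵥ g = diffVec g := by
  ext m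
  simp [Matrix.mulVec, dotProduct, diffOp, diffVec, sub_mul, Finset.sum_sub_distrib,
    Matrix.one_apply]

lemma diffMatrix_eq {n : ℕ} (R : Matrix (Fin (n + 2)) (Fin (n + 2)) ℝ) (hR : R.IsSymm) :
    diffMatrix R = diffOp n * R * (diffOp n)ᵀ := by
  ext m k
  have h := hR.apply k.castSucc (Fin.last (n + 1))
  simp only [diffMatrix, Matrix.mul_apply, diffOp, Matrix.one_apply, Matrix.transpose_apply,
    sub_mul, mul_sub, Finset.sum_sub_distrib, ite_mul, mul_ite, one_mul, mul_one, zero_mul,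
    mul_zero, Finset.sum_ite_eq, Finset.mem_univ, if_true]
  linarith

lemma diffOp_transpose_injective (n : ℕ) : Function.Injective (diffOp n).vecMul := by
  intro a b hab
  ext m
  have h := congrFun hab m.castSucc
  have hne : Fin.last (n + 1) ≠ m.castSucc := (Fin.castSucc_lt_last m).ne'
  simpa [Matrix.vecMul, dotProduct, diffOp, Matrix.one_apply, hne, mul_sub,
    Finset.sum_sub_distrib] using h

lemma diffMatrix_posDef {n : ℕ} (R : Matrix (Fin (n + 2)) (Fin (n + 2)) ℝ) (hR : R.IsSymm)
    (hpd : R.PosDef) : (diffMatrix R).PosDef := by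
  rw [diffMatrix_eq R hR]
  have := hpd.mul_mul_conjTranspose_same (B := diffOp n) (diffOp_transpose_injective n)
  rwa [Matrix.conjTranspose_eq_transpose_of_trivial] at this

lemma phi_key {n : ℕ} (R : Matrix (Fin (n + 2)) (Fin (n + 2)) ℝ) (hR : R.IsSymm)
    (hpd : R.PosDef) (w : Fin (n + 2) → ℝ) :
    ∃ p₀ c : ℝ, 0 ≤ c ∧ ∀ p : ℝ,
      (p • (fun _ => (1 : ℝ)) + w) ⬝ᵥ R⁻¹ *ᵥ (p • (fun _ => (1 : ℝ)) + w)
        = diffVec w ⬝ᵥ (diffMatrix R)⁻¹ *ᵥ diffVec w + (p - p₀) ^ 2 * c := by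
  have hD := diffMatrix_posDef R hR hpd
  have hDu : IsUnit (diffMatrix R).det := (Matrix.isUnit_iff_isUnit_det _).1 hD.isUnit
  have hRu : IsUnit R.det := (Matrix.isUnit_iff_isUnit_det _).1 hpd.isUnit
  set ones : Fin (n + 2) → ℝ := fun _ => (1 : ℝ) with hones
  set y := (diffMatrix R)⁻¹ *ᵥ diffVec w with hy
  set b := (diffOp n)ᵀ *ᵥ y with hb
  set z := R *ᵥ b with hz
  have hBz : diffVec z = diffVec w := by
    rw [← diffOp_mulVec, hz, hb, Matrix.mulVec_mulVec, Matrix.mulVec_mulVec,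
      ← diffMatrix_eq R hR, hy, Matrix.mulVec_mulVec, Matrix.mul_nonsing_inv _ hDu,
      Matrix.one_mulVec]
  have hRz : R⁻¹ *ᵥ z = b := by
    rw [hz, Matrix.mulVec_mulVec, Matrix.nonsing_inv_mul _ hRu, Matrix.one_mulVec]
  have hdot : ∀ g, g ⬝ᵥ b = diffVec g ⬝ᵥ y := by
    intro g
    rw [hb, Matrix.dotProduct_mulVec, Matrix.vecMul_transpose, diffOp_mulVec]
  have h1b : ones ⬝ᵥ b = 0 := by
    rw [hdot]
    have : diffVec ones = 0 := by ext m; simp [diffVec, hones]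
    rw [this, zero_dotProduct]
  have hsymm : ∀ a c, a ⬝ᵥ R⁻¹ *ᵥ c = c ⬝ᵥ R⁻¹ *ᵥ a := by
    intro a c
    rw [Matrix.dotProduct_mulVec, dotProduct_comm, ← Matrix.mulVec_transpose,
      Matrix.transpose_nonsing_inv, hR.eq]
  have hzw : w = z - (z (Fin.last _) - w (Fin.last _)) • ones := by
    ext i
    refine Fin.lastCases ?_ (fun m => ?_) i
    · simp [hones]
    · have := congrFun hBz m
      simp only [diffVec] at this
      simp only [hones, Pi.sub_apply, Pi.smul_apply, smul_eq_mul, mul_one]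
      linarith
  refine ⟨z (Fin.last _) - w (Fin.last _), ones ⬝ᵥ R⁻¹ *ᵥ ones, ?_, fun p => ?_⟩
  · have := hpd.inv.posSemidef.dotProduct_mulVec_nonneg ones
    simpa using this
  · generalize z (Fin.last _) - w (Fin.last _) = p₀ at hzw ⊢
    have e : p • ones + w = z + (p - p₀) • ones := by
      rw [hzw, sub_smul]; abel
    have hzz : z ⬝ᵥ b = diffVec w ⬝ᵥ y := by rw [hdot, hBz]
    rw [e, Matrix.mulVec_add, Matrix.mulVec_smul, hRz, add_dotProduct, dotProduct_add,
      dotProduct_add, smul_dotProduct, smul_dotProduct, dotProduct_smul, dotProduct_smul,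
      hsymm z ones, hRz, h1b, hzz]
    simp only [smul_eq_mul]
    ring

/-- Corollary 2: the power-minimized RSS KL divergence
`φ_min(v) = inf_p (1/2)(p·1 + v − u)ᵀ R⁻¹ (p·1 + v − u)` equals the DRSS KL divergence
`φ_D(v) = (1/2)(Δv − Δu)ᵀ D⁻¹ (Δv − Δu)` for every `v`; consequently, for any map
`v : X → ℝ^N` and any `S ⊆ X`, the minimizers over `S` of `x ↦ φ_min(v x)` and of
`x ↦ φ_D(v x)` coincide. -/
theorem rss_drss_same_optimal_location
    (n : ℕ) (R : Matrix (Fin (n + 2)) (Fin (n + 2)) ℝ)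
    (hRsymm : R.IsSymm) (hRpd : R.PosDef) (u : Fin (n + 2) → ℝ) :
    let ones : Fin (n + 2) → ℝ := fun _ => (1 : ℝ)
    let D := diffMatrix R
    let φmin : (Fin (n + 2) → ℝ) → ℝ := fun v =>
      ⨅ p : ℝ, (1 / 2) * ((p • ones + v - u) ⬝ᵥ (R⁻¹).mulVec (p • ones + v - u))
    let φD : (Fin (n + 2) → ℝ) → ℝ := fun v =>
      (1 / 2) * ((diffVec v - diffVec u) ⬝ᵥ (D⁻¹).mulVec (diffVec v - diffVec u))
    (∀ v : Fin (n + 2) → ℝ, φmin v = φD v) ∧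
      ∀ (X : Type) (vmap : X → (Fin (n + 2) → ℝ)) (S : Set X),
        {x ∈ S | ∀ y ∈ S, φmin (vmap x) ≤ φmin (vmap y)}
          = {x ∈ S | ∀ y ∈ S, φD (vmap x) ≤ φD (vmap y)} := by
  intro ones D φmin φD
  have key : ∀ v, φmin v = φD v := by
    intro v
    obtain ⟨p₀, c, hc, h⟩ := phi_key R hRsymm hRpd (v - u)
    have hd : diffVec (v - u) = diffVec v - diffVec u := by
      ext m
      simp only [diffVec, Pi.sub_apply]
      ring
    rw [hd] at h
    have h' : ∀ p : ℝ, (1 / 2) * ((p • ones + v - u) ⬝ᵥ (R⁻¹).mulVec (p • ones + v - u))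
        = φD v + (1 / 2) * ((p - p₀) ^ 2 * c) := by
      intro p
      rw [add_sub_assoc, h p, mul_add]
    have hl : IsLeast (Set.range fun p : ℝ =>
        (1 / 2) * ((p • ones + v - u) ⬝ᵥ (R⁻¹).mulVec (p • ones + v - u))) (φD v) := by
      constructor
      · refine ⟨p₀, ?_⟩
        simp only [h']
        simp
      · rintro _ ⟨p, rfl⟩
        simp only [h']
        have : 0 ≤ (1 / 2) * ((p - p₀) ^ 2 * c) := by positivity
        linarith
    exact hl.csInf_eq
  refine ⟨key, fun X vmap S => ?_⟩
  simp only [key]
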